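/- The six subgroups have orders |Γ_A| = 128, |Γ_B| = 32, |Γ_C| = 128, |Γ_{A₁}| = 16, |Γ_{B₁}| = 8, and |Γ_{C₁}| = 16. -/

import Mathlib

/-!
Each of the six groups is generated by involutions `x, y, u, v` with `x, y` commuting with `u, v`,
so it is a central product of the dihedral groups `⟨x, y⟩` and `⟨u, v⟩` (for the three smaller groups
`u = v`, and the product is with a group of order two). If `(xy)^n = 1` and `(uv)^m` is a power of
`xy`, every element has the form `(xy)^i x^e (uv)^j u^f` with `i < n`, `j < m`, `e, f < 2`, so the
order is at most `4nm`; it is exactly `4nm` when these normal forms are distinct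
(`card_central_product`).

The relations follow from the recursions. Commutation relations and `g² = 1` for the generators are
proved by induction on words. Writing `g = (g₁, g₂, g₃, g₄)` for an element fixing first letters and
acting by `gᵢ` on tails (`Sect`), one finds `(αγ)² = (ac)² = (β, β, β, β)`, then
`(αβ)⁴ = (ab)⁴`, which acts by `(αγ)²` on every tail, then
`(βγ)⁸ = (1, 1, 1, (γβ)⁸)` and `(bc)⁴ = (1, 1, (cb)⁴, (cb)⁴)`. The last two elements have as sections
only `1` and their own inverses, so they are trivial (`Sect.eq_one`). Hence `Γ_A`, `Γ_B`, `Γ_C` are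
central products with `(n, m) = (8, 4), (4, 2), (8, 4)`, and the three smaller groups have
`m = 1` and `n = 4, 2, 4`.

Distinctness of the normal forms is a finite computation: the action on one or two words of length at
most five separates them (`NekSystem.injective_of_nodup`).
-/

/-- The alphabet `X = {1,2,3,4}`, encoded as `Fin 4` (letter i ↔ `i-1`). -/
abbrev Alph : Type := Fin 4

/-- The set `X*` of finite words over the alphabet. -/
abbrev Word : Type := List Alph

/-- The permutation σ = (12)(34) of the alphabet. -/
def permSigma : Alph → Alph := ![1, 0, 3, 2]

/-- The permutation π = (13)(24) of the alphabet. -/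
def permPi : Alph → Alph := ![2, 3, 0, 1]

/-- A system of six bijections α, β, γ, a, b, c of `X*` satisfying the defining
recursions (each fixes the empty word; the recursions uniquely determine them). -/
structure NekSystem where
  α : Equiv.Perm Word
  β : Equiv.Perm Word
  γ : Equiv.Perm Word
  a : Equiv.Perm Word
  b : Equiv.Perm Word
  c : Equiv.Perm Word
  hαnil : α [] = []
  hβnil : β [] = []
  hγnil : γ [] = []
  hanil : a [] = []
  hbnil : b [] = []
  hcnil : c [] = []
  hα : ∀ (x : Alph) (w : Word), α (x :: w) = permSigma x :: w
  ha : ∀ (x : Alph) (w : Word), a (x :: w) = permPi x :: w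
  hβ0 : ∀ w : Word, β (0 :: w) = 0 :: α w
  hβ1 : ∀ w : Word, β (1 :: w) = 1 :: γ w
  hβ2 : ∀ w : Word, β (2 :: w) = 2 :: α w
  hβ3 : ∀ w : Word, β (3 :: w) = 3 :: γ w
  hγ0 : ∀ w : Word, γ (0 :: w) = 0 :: β w
  hγ1 : ∀ w : Word, γ (1 :: w) = 1 :: w
  hγ2 : ∀ w : Word, γ (2 :: w) = 2 :: w
  hγ3 : ∀ w : Word, γ (3 :: w) = 3 :: β w
  hb0 : ∀ w : Word, b (0 :: w) = 0 :: a (α w)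
  hb1 : ∀ w : Word, b (1 :: w) = 1 :: a (α w)
  hb2 : ∀ w : Word, b (2 :: w) = 2 :: c w
  hb3 : ∀ w : Word, b (3 :: w) = 3 :: c w
  hc0 : ∀ w : Word, c (0 :: w) = 0 :: b (β w)
  hc1 : ∀ w : Word, c (1 :: w) = 1 :: b (β w)
  hc2 : ∀ w : Word, c (2 :: w) = 2 :: b w
  hc3 : ∀ w : Word, c (3 :: w) = 3 :: b w

/-! ### Central products of dihedral groups -/

/-- A cyclic extension step: if `g` normalizes `N = ⟨s⟩` and `g ^ n ∈ N`, then `⟨s, g⟩` is covered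
by the `n` cosets `g ^ i N`. -/
lemma closure_insert_bound {G : Type*} [Group G] (g : G) (s : Set G) (n k : ℕ) (hn : 0 < n)
    (hconj : ∀ h ∈ s, g⁻¹ * h * g ∈ Subgroup.closure s) (hpow : g ^ n ∈ Subgroup.closure s)
    (hs : Finite (Subgroup.closure s) ∧ Nat.card (Subgroup.closure s) ≤ k) :
    Finite (Subgroup.closure (insert g s)) ∧
      Nat.card (Subgroup.closure (insert g s)) ≤ n * k := by
  obtain ⟨hfin, hk⟩ := hs
  set N := Subgroup.closure s with hN
  have hc1 : ∀ h ∈ N, g⁻¹ * h * g ∈ N := by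
    have : N ≤ N.comap (MulAut.conj g⁻¹).toMonoidHom := by
      rw [hN, Subgroup.closure_le]
      intro h hh
      simpa using hconj h hh
    intro h hh
    simpa using this hh
  have hci : ∀ i : ℕ, ∀ h ∈ N, (g ^ i)⁻¹ * h * g ^ i ∈ N := by
    intro i
    induction i with
    | zero => intro h hh; simpa using hh
    | succ i ih =>
      intro h hh
      have := hc1 _ (ih h hh)
      rw [pow_succ]
      simpa [mul_assoc] using this
  have hleft : ∀ h ∈ N, ∀ x : G, (∃ i < n, ∃ k ∈ N, x = g ^ i * k) →
      ∃ i < n, ∃ k ∈ N, h * x = g ^ i * k := by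
    rintro h hh x ⟨i, hi, k, hk, rfl⟩
    exact ⟨i, hi, (g ^ i)⁻¹ * h * g ^ i * k, N.mul_mem (hci i h hh) hk, by group⟩
  have key : ∀ x ∈ Subgroup.closure (insert g s), ∃ i < n, ∃ k ∈ N, x = g ^ i * k := by
    intro x hx
    induction hx using Subgroup.closure_induction_left with
    | one => exact ⟨0, hn, 1, N.one_mem, by simp⟩
    | mul_left h hh y _ ih =>
      rcases hh with rfl | hh
      · obtain ⟨i, hi, k, hk, rfl⟩ := ih
        rcases Nat.lt_or_ge (i + 1) n with h1 | h1
        · exact ⟨i + 1, h1, k, hk, by rw [pow_succ', mul_assoc]⟩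
        · obtain rfl : n = i + 1 := by omega
          exact ⟨0, hn, h ^ (i + 1) * k, N.mul_mem hpow hk, by rw [pow_succ']; simp [mul_assoc]⟩
      · exact hleft h (Subgroup.subset_closure hh) y ih
    | inv_mul_cancel h hh y _ ih =>
      rcases hh with rfl | hh
      · obtain ⟨i, hi, k, hk, rfl⟩ := ih
        rcases i with _ | i
        · obtain ⟨n, rfl⟩ : ∃ l, n = l + 1 := ⟨n - 1, by omega⟩
          exact ⟨n, by omega, (h ^ (n + 1))⁻¹ * k, N.mul_mem (N.inv_mem hpow) hk, by
            rw [pow_succ]; group⟩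
        · exact ⟨i, by omega, k, hk, by rw [pow_succ']; group⟩
      · exact hleft h⁻¹ (N.inv_mem (Subgroup.subset_closure hh)) y ih
  choose! i hi h hh hx using key
  let f : Subgroup.closure (insert g s) → Fin n × N :=
    fun x => (⟨i x, hi x x.2⟩, ⟨h x, hh x x.2⟩)
  have hf : Function.Injective f := by
    intro x y hxy
    simp only [f, Prod.mk.injEq, Fin.mk.injEq, Subtype.mk.injEq] at hxy
    apply Subtype.ext
    rw [hx x x.2, hx y y.2, hxy.1, hxy.2]
  refine ⟨Finite.of_injective f hf, (Nat.card_le_card_of_injective f hf).trans ?_⟩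
  rw [Nat.card_prod, Nat.card_fin]
  exact Nat.mul_le_mul_left n hk

/-- The normal form `(xy)^i x^e (uv)^j u^f` in a central product of the dihedral groups
`⟨x, y⟩` and `⟨u, v⟩`. -/
def normalForm {G : Type*} [Group G] (x y u v : G) (n m : ℕ)
    (p : Fin n × Fin 2 × Fin m × Fin 2) : G :=
  (x * y) ^ (p.1 : ℕ) * x ^ (p.2.1 : ℕ) * (u * v) ^ (p.2.2.1 : ℕ) * u ^ (p.2.2.2 : ℕ)

/-- Order of a central product of dihedral groups whose normal forms are pairwise distinct. The
degenerate case `u = v`, `m = 1` is the direct product of a dihedral group with `⟨u⟩`. -/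
lemma card_central_product {G : Type*} [Group G] (x y u v : G) (n m : ℕ) (hn : 0 < n) (hm : 0 < m)
    (hx : x * x = 1) (hy : y * y = 1) (hu : u * u = 1) (hv : v * v = 1)
    (hux : Commute u x) (huy : Commute u y) (hvx : Commute v x) (hvy : Commute v y)
    (hxy : (x * y) ^ n = 1) (huv : (u * v) ^ m ∈ Subgroup.zpowers (x * y))
    (hinj : Function.Injective (normalForm x y u v n m)) :
    Nat.card (Subgroup.closure {x, y, u, v}) = 4 * n * m := by
  have hx' : x⁻¹ = x := inv_eq_of_mul_eq_one_left hx
  have hy' : y⁻¹ = y := inv_eq_of_mul_eq_one_left hy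
  have hu' : u⁻¹ = u := inv_eq_of_mul_eq_one_left hu
  have hv' : v⁻¹ = v := inv_eq_of_mul_eq_one_left hv
  have hfix : ∀ (g h : G) (s : Set G), Commute g h → h ∈ s →
      g⁻¹ * h * g ∈ Subgroup.closure s := by
    intro g h s hgh hs
    have : g⁻¹ * h * g = h := by rw [mul_assoc, ← hgh.eq, inv_mul_cancel_left]
    rw [this]
    exact Subgroup.subset_closure hs
  have b0 : Finite (Subgroup.closure (∅ : Set G)) ∧
      Nat.card (Subgroup.closure (∅ : Set G)) ≤ 1 := by
    rw [Subgroup.closure_empty]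
    exact ⟨inferInstance, by simp⟩
  have b1 := closure_insert_bound (x * y) ∅ n 1 hn (by simp) (by simp [hxy]) b0
  have b2 := closure_insert_bound x _ 2 _ two_pos (by
    rintro h (rfl | h)
    · have : x⁻¹ * (x * y) * x = (x * y)⁻¹ := by rw [mul_inv_rev, hx', hy', ← mul_assoc, hx, one_mul]
      rw [this]
      exact Subgroup.inv_mem _ (Subgroup.subset_closure (by simp))
    · exact h.elim) (by rw [pow_two, hx]; exact Subgroup.one_mem _) b1
  have b3 := closure_insert_bound (u * v) _ m _ hm (by
    rintro h (rfl | rfl | h)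
    · exact hfix _ _ _ (hux.mul_left hvx) (by simp)
    · exact hfix _ _ _ ((hux.mul_left hvx).mul_right (huy.mul_left hvy)) (by simp)
    · exact h.elim) (by
      have : Subgroup.zpowers (x * y) ≤ Subgroup.closure {x, x * y} := by
        rw [Subgroup.zpowers_le]
        exact Subgroup.subset_closure (by simp)
      simpa using this huv) b2
  have b4 := closure_insert_bound u _ 2 _ two_pos (by
    rintro h (rfl | rfl | rfl | h)
    · have : u⁻¹ * (u * v) * u = (u * v)⁻¹ := by rw [mul_inv_rev, hu', hv', ← mul_assoc, hu, one_mul]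
      rw [this]
      exact Subgroup.inv_mem _ (Subgroup.subset_closure (by simp))
    · exact hfix _ _ _ hux (by simp)
    · exact hfix _ _ _ (hux.mul_right huy) (by simp)
    · exact h.elim) (by rw [pow_two, hu]; exact Subgroup.one_mem _) b3
  have heq : Subgroup.closure {x, y, u, v} =
      Subgroup.closure (insert u (insert (u * v) (insert x (insert (x * y) ∅)))) := by
    have mem : ∀ {g : G} {s : Set G}, g ∈ s → g ∈ Subgroup.closure s :=
      fun h => Subgroup.subset_closure h
    apply le_antisymm <;> rw [Subgroup.closure_le]
    · rintro g (rfl | rfl | rfl | rfl)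
      · exact mem (by simp)
      · have := Subgroup.mul_mem (Subgroup.closure
          (insert u (insert (u * v) (insert x (insert (x * g) ∅)))))
          (mem (by simp : x ∈ _)) (mem (by simp : x * g ∈ _))
        rwa [← mul_assoc, hx, one_mul] at this
      · exact mem (by simp)
      · have := Subgroup.mul_mem (Subgroup.closure
          (insert u (insert (u * g) (insert x (insert (x * y) ∅)))))
          (mem (by simp : u ∈ _)) (mem (by simp : u * g ∈ _))
        rwa [← mul_assoc, hu, one_mul] at this
    · rintro g (rfl | rfl | rfl | rfl | h)
      · exact mem (by simp)
      · exact Subgroup.mul_mem _ (mem (by simp)) (mem (by simp))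
      · exact mem (by simp)
      · exact Subgroup.mul_mem _ (mem (by simp)) (mem (by simp))
      · exact h.elim
  rw [← heq] at b4
  obtain ⟨hfin, hle⟩ := b4
  apply le_antisymm
  · calc _ ≤ _ := hle
      _ = _ := by ring
  · have mem : ∀ g ∈ ({x, y, u, v} : Set G), g ∈ Subgroup.closure {x, y, u, v} :=
      fun g h => Subgroup.subset_closure h
    have hmem : ∀ p, normalForm x y u v n m p ∈ Subgroup.closure {x, y, u, v} := by
      intro p
      have h1 := mem x (by simp)
      have h2 := mem y (by simp)
      have h3 := mem u (by simp)
      have h4 := mem v (by simp)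
      exact mul_mem (mul_mem (mul_mem (pow_mem (mul_mem h1 h2) _) (pow_mem h1 _))
        (pow_mem (mul_mem h3 h4) _)) (pow_mem h3 _)
    have := Nat.card_le_card_of_injective
      (fun p => (⟨_, hmem p⟩ : Subgroup.closure {x, y, u, v}))
      (fun p q h => hinj (Subtype.ext_iff.mp h))
    simp only [Nat.card_prod, Nat.card_fin] at this
    calc 4 * n * m = n * (2 * (m * 2)) := by ring
      _ ≤ _ := this

/-! ### Computing the action on short words -/

/-- The six generators, as symbols. -/
inductive Gen
  | A | B | C | a | b | c

/-- Permutation of the first letter effected by a generator. -/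
def Gen.perm : Gen → Alph → Alph
  | .A => permSigma
  | .a => permPi
  | _ => id

/-- Action on the tail of a word beginning with the given letter, as a product of generators. -/
def Gen.sec : Gen → Alph → List Gen
  | .B => ![[.A], [.C], [.A], [.C]]
  | .C => ![[.B], [], [], [.B]]
  | .b => ![[.a, .A], [.a, .A], [.c], [.c]]
  | .c => ![[.b, .B], [.b, .B], [.b], [.b]]
  | _ => fun _ => []

/-- Computable action of a generator on words of length at most the first argument. -/
def actN : ℕ → Gen → Word → Word
  | 0, _, w => w
  | _ + 1, _, [] => []
  | n + 1, g, x :: w => g.perm x :: (g.sec x).foldr (actN n) w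

/-- Computable action on a word of length at most `5` of a product of generators. -/
def act5 (l : List Gen) (w : Word) : Word := l.foldr (actN 5) w

/-- The computable counterpart of `normalForm`, acting on a word of length at most `5`. -/
def normalFormAct (x y u v : List Gen) (n m : ℕ) (w : Word)
    (p : Fin n × Fin 2 × Fin m × Fin 2) : Word :=
  (act5 (x ++ y))^[p.1] ((act5 x)^[p.2.1] ((act5 (u ++ v))^[p.2.2.1] ((act5 u)^[p.2.2.2] w)))

/-- A list enumeration of the index set of the normal forms. -/
def indexList (n m : ℕ) : List (Fin n × Fin 2 × Fin m × Fin 2) :=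
  List.finRange n ×ˢ (List.finRange 2 ×ˢ (List.finRange m ×ˢ List.finRange 2))

namespace NekSystem
variable (S : NekSystem)

/-- The permutation named by a symbol. -/
def gen : Gen → Equiv.Perm Word
  | .A => S.α
  | .B => S.β
  | .C => S.γ
  | .a => S.a
  | .b => S.b
  | .c => S.c

/-- The permutation named by a list of symbols. -/
def ev (l : List Gen) : Equiv.Perm Word := (l.map S.gen).prod

lemma ev_apply (l : List Gen) (w : Word) : S.ev l w = l.foldr (fun g v => S.gen g v) w := by
  induction l with
  | nil => rfl
  | cons g l ih =>
    simp only [ev, List.map_cons, List.prod_cons, List.foldr_cons] at ih ⊢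
    rw [← ih]
    rfl

lemma gen_nil (g : Gen) : S.gen g [] = [] := by
  cases g
  exacts [S.hαnil, S.hβnil, S.hγnil, S.hanil, S.hbnil, S.hcnil]

lemma gen_cons (g : Gen) (x : Alph) (w : Word) :
    S.gen g (x :: w) = g.perm x :: S.ev (g.sec x) w := by
  cases g <;> fin_cases x <;>
    simp [ev_apply, gen, Gen.perm, Gen.sec, S.hα, S.ha, S.hβ0, S.hβ1, S.hβ2, S.hβ3, S.hγ0, S.hγ1,
      S.hγ2, S.hγ3, S.hb0, S.hb1, S.hb2, S.hb3, S.hc0, S.hc1, S.hc2, S.hc3]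

lemma length_foldr (n : ℕ) (l : List Gen) (w : Word)
    (h : ∀ g, ∀ w : Word, w.length ≤ n → actN n g w = S.gen g w ∧ (S.gen g w).length = w.length)
    (hw : w.length ≤ n) : l.foldr (actN n) w = S.ev l w ∧ (S.ev l w).length = w.length := by
  rw [ev_apply]
  induction l with
  | nil => simp
  | cons g l ih =>
    simp only [List.foldr_cons]
    rw [ih.1]
    have := h g (l.foldr (fun g v => S.gen g v) w) (by rw [ih.2]; exact hw)
    exact ⟨this.1, this.2.trans ih.2⟩

lemma actN_eq (n : ℕ) : ∀ (g : Gen) (w : Word), w.length ≤ n →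
    actN n g w = S.gen g w ∧ (S.gen g w).length = w.length := by
  induction n with
  | zero =>
    intro g w hw
    obtain rfl : w = [] := List.length_eq_zero_iff.mp (by omega)
    simp [actN, gen_nil]
  | succ n ih =>
    intro g w hw
    cases w with
    | nil => simp [actN, gen_nil]
    | cons x w =>
      have := S.length_foldr n (g.sec x) w ih (by simpa using hw)
      rw [gen_cons, actN, this.1]
      simp [this.2]

lemma act5_eq (l : List Gen) (w : Word) (hw : w.length ≤ 5) :
    act5 l w = S.ev l w ∧ (S.ev l w).length = w.length :=
  S.length_foldr 5 l w (S.actN_eq 5) hw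

lemma iterate_act5_eq (l : List Gen) (k : ℕ) (w : Word) (hw : w.length ≤ 5) :
    (act5 l)^[k] w = (S.ev l ^ k) w ∧ ((S.ev l ^ k) w).length = w.length := by
  induction k with
  | zero => simp
  | succ k ih =>
    rw [Function.iterate_succ_apply', ih.1, pow_succ', Equiv.Perm.mul_apply]
    have := S.act5_eq l ((S.ev l ^ k) w) (by omega)
    exact ⟨this.1, this.2.trans ih.2⟩

lemma normalFormAct_eq (x y u v : List Gen) (n m : ℕ) (w : Word) (hw : w.length ≤ 5)
    (p : Fin n × Fin 2 × Fin m × Fin 2) :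
    normalFormAct x y u v n m w p = normalForm (S.ev x) (S.ev y) (S.ev u) (S.ev v) n m p w := by
  have hm : ∀ k l, S.ev k * S.ev l = S.ev (k ++ l) := by simp [ev]
  obtain ⟨e1, l1⟩ := S.iterate_act5_eq u p.2.2.2 w hw
  obtain ⟨e2, l2⟩ := S.iterate_act5_eq (u ++ v) p.2.2.1 _ (l1.trans_le hw)
  obtain ⟨e3, l3⟩ := S.iterate_act5_eq x p.2.1 _ ((l2.trans l1).trans_le hw)
  obtain ⟨e4, -⟩ := S.iterate_act5_eq (x ++ y) p.1 _ ((l3.trans (l2.trans l1)).trans_le hw)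
  simp only [normalFormAct, normalForm, e1, e2, e3, e4, hm, Equiv.Perm.mul_apply]

/-- Distinct normal forms are distinguished by their action on two words `t₁`, `t₂`: a finite
computation. -/
lemma injective_of_nodup (x y u v : List Gen) (n m : ℕ) (t₁ t₂ : Word)
    (h₁ : t₁.length ≤ 5) (h₂ : t₂.length ≤ 5)
    (h : ((indexList n m).map fun p =>
      (normalFormAct x y u v n m t₁ p, normalFormAct x y u v n m t₂ p)).Nodup) :
    Function.Injective (normalForm (S.ev x) (S.ev y) (S.ev u) (S.ev v) n m) := by
  intro p q hpq
  have hmem : ∀ p, p ∈ indexList n m := by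
    rintro ⟨i, e, j, f⟩
    simp [indexList]
  refine List.inj_on_of_nodup_map h (hmem p) (hmem q) ?_
  simp only [S.normalFormAct_eq x y u v n m _ h₁, S.normalFormAct_eq x y u v n m _ h₂, hpq]

end NekSystem

/-! ### Relations among the generators -/

/-- `g` fixes all first letters and acts on the tail of a word beginning with `x` by `h x`. -/
def Sect (g : Equiv.Perm Word) (h : Alph → Equiv.Perm Word) : Prop :=
  g [] = [] ∧ ∀ x w, g (x :: w) = x :: h x w

lemma Sect.mul {g g' : Equiv.Perm Word} {h h' : Alph → Equiv.Perm Word}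
    (H : Sect g h) (H' : Sect g' h') : Sect (g * g') (h * h') := by
  refine ⟨?_, fun x w => ?_⟩
  · rw [Equiv.Perm.mul_apply, H'.1, H.1]
  · rw [Equiv.Perm.mul_apply, H'.2, H.2]
    rfl

lemma Sect.pow {g : Equiv.Perm Word} {h : Alph → Equiv.Perm Word} (H : Sect g h) (n : ℕ) :
    Sect (g ^ n) (h ^ n) := by
  induction n with
  | zero => exact ⟨rfl, fun x w => rfl⟩
  | succ n ih =>
    rw [pow_succ, pow_succ]
    exact ih.mul H

lemma Sect.ext {g g' : Equiv.Perm Word} {h h' : Alph → Equiv.Perm Word}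
    (H : Sect g h) (H' : Sect g' h') (e : ∀ x, h x = h' x) : g = g' := by
  ext1 w
  cases w with
  | nil => rw [H.1, H'.1]
  | cons x w => rw [H.2, H'.2, e]

/-- Coinduction principle: an element whose sections are all `1`, itself or its inverse is
trivial. -/
lemma Sect.eq_one {g : Equiv.Perm Word} {h : Alph → Equiv.Perm Word}
    (H : Sect g h) (e : ∀ x, h x = 1 ∨ h x = g ∨ h x = g⁻¹) : g = 1 := by
  ext1 w
  induction w with
  | nil => exact H.1
  | cons x w ih =>
    rw [H.2]
    rcases e x with h1 | h1 | h1 <;> rw [h1]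
    · rfl
    · rw [ih]
      rfl
    · rw [Equiv.Perm.inv_eq_iff_eq.mpr (by rw [ih]; rfl : w = g w)]
      rfl

namespace NekSystem
variable (S : NekSystem)

lemma hα0 (w : Word) : S.α (0 :: w) = 1 :: w := S.hα 0 w
lemma hα1 (w : Word) : S.α (1 :: w) = 0 :: w := S.hα 1 w
lemma hα2 (w : Word) : S.α (2 :: w) = 3 :: w := S.hα 2 w
lemma hα3 (w : Word) : S.α (3 :: w) = 2 :: w := S.hα 3 w
lemma ha0 (w : Word) : S.a (0 :: w) = 2 :: w := S.ha 0 w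
lemma ha1 (w : Word) : S.a (1 :: w) = 3 :: w := S.ha 1 w
lemma ha2 (w : Word) : S.a (2 :: w) = 0 :: w := S.ha 2 w
lemma ha3 (w : Word) : S.a (3 :: w) = 1 :: w := S.ha 3 w

attribute [local simp] hα0 hα1 hα2 hα3 ha0 ha1 ha2 ha3 hβ0 hβ1 hβ2 hβ3 hγ0 hγ1 hγ2 hγ3
  hb0 hb1 hb2 hb3 hc0 hc1 hc2 hc3 hαnil hβnil hγnil hanil hbnil hcnil

lemma word_cases {P : Word → Prop} (h : P []) (h0 : ∀ w, P (0 :: w)) (h1 : ∀ w, P (1 :: w))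
    (h2 : ∀ w, P (2 :: w)) (h3 : ∀ w, P (3 :: w)) (w : Word) : P w := by
  rcases w with _ | ⟨x, w⟩
  · exact h
  · fin_cases x
    exacts [h0 w, h1 w, h2 w, h3 w]

lemma αα (w : Word) : S.α (S.α w) = w := by
  induction w using word_cases <;> simp

lemma aa (w : Word) : S.a (S.a w) = w := by
  induction w using word_cases <;> simp

lemma aα (w : Word) : S.a (S.α w) = S.α (S.a w) := by
  induction w using word_cases <;> simp

lemma βγ_invol (w : Word) : S.β (S.β w) = w ∧ S.γ (S.γ w) = w := by
  induction w with
  | nil => simp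
  | cons x w ih => fin_cases x <;> simp [αα, ih]

lemma ββ (w : Word) : S.β (S.β w) = w := (S.βγ_invol w).1

lemma γγ (w : Word) : S.γ (S.γ w) = w := (S.βγ_invol w).2

lemma bα (w : Word) : S.b (S.α w) = S.α (S.b w) := by
  induction w using word_cases <;> simp

lemma cα (w : Word) : S.c (S.α w) = S.α (S.c w) := by
  induction w using word_cases <;> simp

lemma aβ (w : Word) : S.a (S.β w) = S.β (S.a w) := by
  induction w using word_cases <;> simp

lemma aαγ (w : Word) : S.a (S.α (S.γ w)) = S.γ (S.a (S.α w)) := by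
  induction w using word_cases <;> simp

lemma bβ_cγ (w : Word) : S.b (S.β w) = S.β (S.b w) ∧ S.c (S.γ w) = S.γ (S.c w) := by
  induction w with
  | nil => simp
  | cons x w ih => fin_cases x <;> simp [cα, ββ, aαγ, αα, ih, ← aα]

lemma bβ (w : Word) : S.b (S.β w) = S.β (S.b w) := (S.bβ_cγ w).1

lemma cγ (w : Word) : S.c (S.γ w) = S.γ (S.c w) := (S.bβ_cγ w).2

lemma bc_invol (w : Word) : S.b (S.b w) = w ∧ S.c (S.c w) = w := by
  induction w with
  | nil => simp
  | cons x w ih => fin_cases x <;> simp [aα, αα, aa, bβ, ββ, ih]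

lemma bβγ_cγβ (w : Word) : S.b (S.β (S.γ w)) = S.γ (S.b (S.β w)) ∧
    S.c (S.γ (S.β w)) = S.β (S.c (S.γ w)) := by
  induction w with
  | nil => simp
  | cons x w ih => fin_cases x <;> simp [aβ, αα, bα, ββ, ih]

lemma mαα : S.α * S.α = 1 := Equiv.ext S.αα
lemma mββ : S.β * S.β = 1 := Equiv.ext S.ββ
lemma mγγ : S.γ * S.γ = 1 := Equiv.ext S.γγ
lemma maa : S.a * S.a = 1 := Equiv.ext S.aa
lemma mbb : S.b * S.b = 1 := Equiv.ext fun w => (S.bc_invol w).1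
lemma mcc : S.c * S.c = 1 := Equiv.ext fun w => (S.bc_invol w).2
lemma comm_aα : Commute S.a S.α := Equiv.ext S.aα
lemma comm_aβ : Commute S.a S.β := Equiv.ext S.aβ
lemma comm_bα : Commute S.b S.α := Equiv.ext S.bα
lemma comm_bβ : Commute S.b S.β := Equiv.ext S.bβ
lemma comm_cα : Commute S.c S.α := Equiv.ext S.cα
lemma comm_cγ : Commute S.c S.γ := Equiv.ext S.cγ
lemma comm_aα_γ : Commute (S.a * S.α) S.γ := Equiv.ext S.aαγ
lemma comm_bβ_γ : Commute (S.b * S.β) S.γ := Equiv.ext fun w => (S.bβγ_cγβ w).1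
lemma comm_cγ_β : Commute (S.c * S.γ) S.β := Equiv.ext fun w => (S.bβγ_cγβ w).2

lemma sect_of {g h0 h1 h2 h3 : Equiv.Perm Word} (hn : g [] = []) (e0 : ∀ w, g (0 :: w) = 0 :: h0 w)
    (e1 : ∀ w, g (1 :: w) = 1 :: h1 w) (e2 : ∀ w, g (2 :: w) = 2 :: h2 w)
    (e3 : ∀ w, g (3 :: w) = 3 :: h3 w) : Sect g ![h0, h1, h2, h3] := by
  refine ⟨hn, fun x w => ?_⟩
  fin_cases x
  exacts [e0 w, e1 w, e2 w, e3 w]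

lemma sect_β : Sect S.β ![S.α, S.γ, S.α, S.γ] := by apply sect_of <;> simp

lemma sect_γ : Sect S.γ ![S.β, 1, 1, S.β] := by apply sect_of <;> simp

lemma sect_b : Sect S.b ![S.a * S.α, S.a * S.α, S.c, S.c] := by apply sect_of <;> simp

lemma sect_c : Sect S.c ![S.b * S.β, S.b * S.β, S.b, S.b] := by apply sect_of <;> simp

/-- `(αγ)²` acts by `β` on every tail. -/
lemma sect_αγ_sq : Sect ((S.α * S.γ) ^ 2) ![S.β, S.β, S.β, S.β] := by
  apply sect_of <;> simp [pow_two]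

lemma ac_sq : (S.a * S.c) ^ 2 = (S.α * S.γ) ^ 2 := by
  refine Sect.ext (h := ![S.β, S.β, S.β, S.β]) ?_ S.sect_αγ_sq fun _ => rfl
  apply sect_of <;> simp [pow_two, bβ, fun w => (S.bc_invol w).1]

lemma αγ_pow : (S.α * S.γ) ^ 4 = 1 := by
  have h := S.sect_αγ_sq.pow 2
  rw [← pow_mul] at h
  refine h.eq_one fun x => Or.inl ?_
  fin_cases x <;> simp [pow_two, mββ]

lemma γα_sq : (S.γ * S.α) ^ 2 = (S.α * S.γ) ^ 2 := by
  refine Sect.ext (h := ![S.β, S.β, S.β, S.β]) ?_ S.sect_αγ_sq fun _ => rfl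
  apply sect_of <;> simp [pow_two]

lemma sect_αβ_sq :
    Sect ((S.α * S.β) ^ 2) ![S.γ * S.α, S.α * S.γ, S.γ * S.α, S.α * S.γ] := by
  apply sect_of <;> simp [pow_two]

/-- `(αβ)⁴` acts by `(αγ)²` on every tail. -/
lemma sect_αβ_pow : Sect ((S.α * S.β) ^ 4) fun _ => (S.α * S.γ) ^ 2 := by
  have h := S.sect_αβ_sq.pow 2
  rw [← pow_mul] at h
  convert h using 1
  funext x
  fin_cases x <;> simp [γα_sq]

lemma αβ_pow : (S.α * S.β) ^ 8 = 1 := by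
  have h := S.sect_αβ_pow.pow 2
  rw [← pow_mul] at h
  refine h.eq_one fun x => Or.inl ?_
  rw [Pi.pow_apply, ← pow_mul, αγ_pow]

lemma sect_ab_sq : Sect ((S.a * S.b) ^ 2)
    ![S.c * (S.a * S.α), S.c * (S.a * S.α), S.a * S.α * S.c, S.a * S.α * S.c] := by
  apply sect_of <;> simp [pow_two]

lemma ca_sq : (S.c * S.a) ^ 2 = (S.α * S.γ) ^ 2 := by
  refine Sect.ext (h := ![S.β, S.β, S.β, S.β]) ?_ S.sect_αγ_sq fun _ => rfl
  apply sect_of <;> simp [pow_two, bβ, fun w => (S.bc_invol w).1]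

lemma ab_pow : (S.a * S.b) ^ 4 = (S.α * S.β) ^ 4 := by
  have h := S.sect_ab_sq.pow 2
  rw [← pow_mul] at h
  have h1 : (S.c * (S.a * S.α)) ^ 2 = (S.α * S.γ) ^ 2 := by
    rw [← mul_assoc, (S.comm_cα.mul_left S.comm_aα).mul_pow, ca_sq, pow_two S.α, mαα, mul_one]
  have h2 : (S.a * S.α * S.c) ^ 2 = (S.α * S.γ) ^ 2 := by
    rw [mul_assoc, ← S.comm_cα.eq, ← mul_assoc, (S.comm_aα.mul_left S.comm_cα).mul_pow, ac_sq,
      pow_two S.α, mαα, mul_one]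
  refine h.ext S.sect_αβ_pow fun x => ?_
  fin_cases x <;> simp [h1, h2]

/-- `αβ` and `ab` are commuting elements of order `8` with the same fourth power. -/
lemma aαbβ_pow : (S.a * S.α * (S.b * S.β)) ^ 4 = 1 := by
  have h : S.a * S.α * (S.b * S.β) = S.a * S.b * (S.α * S.β) := by
    rw [mul_assoc, ← mul_assoc S.α, ← S.comm_bα.eq]
    simp only [mul_assoc]
  rw [h, ((S.comm_aα.mul_right S.comm_aβ).mul_left (S.comm_bα.mul_right S.comm_bβ)).mul_pow,
    ab_pow, ← pow_add, αβ_pow]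

lemma βγ_pow : (S.β * S.γ) ^ 8 = 1 := by
  refine ((S.sect_β.mul S.sect_γ).pow 8).eq_one fun x => ?_
  have hγ : S.γ ^ 8 = 1 := by rw [pow_mul S.γ 2 4, pow_two, mγγ, one_pow]
  have hα : S.α ^ 8 = 1 := by rw [pow_mul S.α 2 4, pow_two, mαα, one_pow]
  have hi : ((S.β * S.γ) ^ 8)⁻¹ = (S.γ * S.β) ^ 8 := by
    rw [← inv_pow, mul_inv_rev, inv_eq_of_mul_eq_one_left S.mββ, inv_eq_of_mul_eq_one_left S.mγγ]
  fin_cases x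
  · left; simpa using S.αβ_pow
  · left; simpa using hγ
  · left; simpa using hα
  · right; right; rw [hi]; rfl

lemma bc_pow : (S.b * S.c) ^ 4 = 1 := by
  refine ((S.sect_b.mul S.sect_c).pow 4).eq_one fun x => ?_
  have hi : ((S.b * S.c) ^ 4)⁻¹ = (S.c * S.b) ^ 4 := by
    rw [← inv_pow, mul_inv_rev, inv_eq_of_mul_eq_one_left S.mbb, inv_eq_of_mul_eq_one_left S.mcc]
  fin_cases x
  · left; simpa using S.aαbβ_pow
  · left; simpa using S.aαbβ_pow
  · right; right; rw [hi]; rfl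
  · right; right; rw [hi]; rfl

/-- Since `bc` is the product of the commuting elements `bβ·cγ` and `βγ`, and `(bc)⁴ = 1`, the
fourth power of `bβ·cγ` is a power of `βγ`. -/
lemma bβcγ_pow : (S.b * S.β * (S.c * S.γ)) ^ 4 ∈ Subgroup.zpowers (S.β * S.γ) := by
  have hcγγ : Commute (S.c * S.γ) S.γ := S.comm_cγ.mul_left (Commute.refl _)
  have hbββ : Commute (S.b * S.β) S.β := S.comm_bβ.mul_left (Commute.refl _)
  have hc : Commute (S.b * S.β * (S.c * S.γ)) (S.β * S.γ) :=
    (hbββ.mul_left S.comm_cγ_β).mul_right (S.comm_bβ_γ.mul_left hcγγ)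
  have h : S.b * S.c = S.b * S.β * (S.c * S.γ) * (S.β * S.γ) := by
    calc S.b * S.c = S.b * (S.β * S.β) * (S.c * (S.γ * S.γ)) := by rw [mββ, mγγ, mul_one, mul_one]
      _ = S.b * S.β * (S.β * (S.c * S.γ)) * S.γ := by simp only [mul_assoc]
      _ = S.b * S.β * (S.c * S.γ) * (S.β * S.γ) := by
        rw [← S.comm_cγ_β.eq]
        simp only [mul_assoc]
  have h4 := S.bc_pow
  rw [h, hc.mul_pow] at h4
  rw [eq_inv_of_mul_eq_one_left h4]
  exact inv_mem (pow_mem (Subgroup.mem_zpowers _) _)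

/-! ### Orders of the subgroups -/

lemma closure_eq_of {G : Type*} [Group G] {s t : Set G} (h1 : ∀ g ∈ s, g ∈ Subgroup.closure t)
    (h2 : ∀ g ∈ t, g ∈ Subgroup.closure s) : Subgroup.closure s = Subgroup.closure t :=
  le_antisymm ((Subgroup.closure_le _).mpr h1) ((Subgroup.closure_le _).mpr h2)

lemma mul_self_of_comm {G : Type*} [Group G] {g h : G} (hc : Commute g h) (hg : g * g = 1)
    (hh : h * h = 1) : g * h * (g * h) = 1 := by
  rw [← pow_two, hc.mul_pow, pow_two, pow_two, hg, hh, one_mul]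

lemma mem_of_mul_mem {G : Type*} [Group G] {K : Subgroup G} {g h : G}
    (h1 : g * h ∈ K) (h2 : h ∈ K) : g ∈ K := (K.mul_mem_cancel_right h2).mp h1

/-- `Γ_A` is a central product of `⟨β, γ⟩` and `⟨bβ, cγ⟩`, dihedral of order `16`. -/
lemma card_A : Nat.card (Subgroup.closure {S.β, S.γ, S.b, S.c}) = 128 := by
  have he : Subgroup.closure {S.β, S.γ, S.b, S.c} =
      Subgroup.closure {S.β, S.γ, S.b * S.β, S.c * S.γ} := by
    apply closure_eq_of
    · have m1 : S.β ∈ Subgroup.closure {S.β, S.γ, S.b * S.β, S.c * S.γ} :=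
        Subgroup.subset_closure (by simp)
      have m2 : S.γ ∈ Subgroup.closure {S.β, S.γ, S.b * S.β, S.c * S.γ} :=
        Subgroup.subset_closure (by simp)
      have m3 : S.b * S.β ∈ Subgroup.closure {S.β, S.γ, S.b * S.β, S.c * S.γ} :=
        Subgroup.subset_closure (by simp)
      have m4 : S.c * S.γ ∈ Subgroup.closure {S.β, S.γ, S.b * S.β, S.c * S.γ} :=
        Subgroup.subset_closure (by simp)
      rintro g (rfl | rfl | rfl | rfl)
      exacts [m1, m2, mem_of_mul_mem m3 m1, mem_of_mul_mem m4 m2]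
    · have m : ∀ g ∈ ({S.β, S.γ, S.b, S.c} : Set _),
        g ∈ Subgroup.closure {S.β, S.γ, S.b, S.c} := fun g h => Subgroup.subset_closure h
      rintro g (rfl | rfl | rfl | rfl)
      exacts [m _ (by simp), m _ (by simp), mul_mem (m _ (by simp)) (m _ (by simp)),
        mul_mem (m _ (by simp)) (m _ (by simp))]
  have hinj := S.injective_of_nodup [.B] [.C] [.b, .B] [.c, .C] 8 4 [0, 0, 0, 0, 0]
    [0, 0, 1, 0, 0] (by decide) (by decide) (by decide +kernel)
  simp only [ev, gen, List.map_cons, List.map_nil, List.prod_cons, List.prod_nil, mul_one] at hinj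
  rw [he]
  exact card_central_product _ _ _ _ 8 4 (by norm_num) (by norm_num) S.mββ S.mγγ
    (mul_self_of_comm S.comm_bβ S.mbb S.mββ) (mul_self_of_comm S.comm_cγ S.mcc S.mγγ)
    (S.comm_bβ.mul_left (Commute.refl _)) S.comm_bβ_γ S.comm_cγ_β
    (S.comm_cγ.mul_left (Commute.refl _)) S.βγ_pow S.bβcγ_pow hinj

/-- `Γ_B` is a central product of `⟨α, γ⟩` and `⟨aα, c⟩`, dihedral of order `8`. -/
lemma card_B : Nat.card (Subgroup.closure {S.α, S.γ, S.a, S.c}) = 32 := by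
  have he : Subgroup.closure {S.α, S.γ, S.a, S.c} =
      Subgroup.closure {S.α, S.γ, S.a * S.α, S.c} := by
    apply closure_eq_of
    · have m1 : S.α ∈ Subgroup.closure {S.α, S.γ, S.a * S.α, S.c} :=
        Subgroup.subset_closure (by simp)
      rintro g (rfl | rfl | rfl | rfl)
      exacts [m1, Subgroup.subset_closure (by simp),
        mem_of_mul_mem (Subgroup.subset_closure (by simp)) m1, Subgroup.subset_closure (by simp)]
    · have m : ∀ g ∈ ({S.α, S.γ, S.a, S.c} : Set _),
        g ∈ Subgroup.closure {S.α, S.γ, S.a, S.c} := fun g h => Subgroup.subset_closure h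
      rintro g (rfl | rfl | rfl | rfl)
      exacts [m _ (by simp), m _ (by simp), mul_mem (m _ (by simp)) (m _ (by simp)), m _ (by simp)]
  have hinj := S.injective_of_nodup [.A] [.C] [.a, .A] [.c] 4 2 [0, 0, 0, 0]
    [1, 0, 0, 0] (by decide) (by decide) (by decide +kernel)
  simp only [ev, gen, List.map_cons, List.map_nil, List.prod_cons, List.prod_nil, mul_one] at hinj
  have hp : (S.a * S.α * S.c) ^ 2 ∈ Subgroup.zpowers (S.α * S.γ) := by
    rw [mul_assoc, ← S.comm_cα.eq, ← mul_assoc, (S.comm_aα.mul_left S.comm_cα).mul_pow, ac_sq,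
      pow_two S.α, mαα, mul_one]
    exact pow_mem (Subgroup.mem_zpowers _) _
  rw [he]
  exact card_central_product _ _ _ _ 4 2 (by norm_num) (by norm_num) S.mαα S.mγγ
    (mul_self_of_comm S.comm_aα S.maa S.mαα) S.mcc
    (S.comm_aα.mul_left (Commute.refl _)) S.comm_aα_γ S.comm_cα S.comm_cγ S.αγ_pow hp hinj

/-- `Γ_C` is a central product of `⟨α, β⟩` and `⟨a, b⟩`, dihedral of order `16`. -/
lemma card_C : Nat.card (Subgroup.closure {S.α, S.β, S.a, S.b}) = 128 := by
  have hinj := S.injective_of_nodup [.A] [.B] [.a] [.b] 8 4 [0, 0, 0, 0]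
    [0, 1, 0, 0] (by decide) (by decide) (by decide +kernel)
  simp only [ev, gen, List.map_cons, List.map_nil, List.prod_cons, List.prod_nil, mul_one] at hinj
  exact card_central_product _ _ _ _ 8 4 (by norm_num) (by norm_num) S.mαα S.mββ S.maa S.mbb
    S.comm_aα S.comm_aβ S.comm_bα S.comm_bβ S.αβ_pow
    (by rw [ab_pow]; exact pow_mem (Subgroup.mem_zpowers _) _) hinj

/-- `Γ_{A₁}` is the direct product of the dihedral group `⟨b, c⟩` of order `8` with `⟨α⟩`. -/
lemma card_A₁ : Nat.card (Subgroup.closure {S.α, S.b, S.c}) = 16 := by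
  have he : ({S.α, S.b, S.c} : Set (Equiv.Perm Word)) = {S.b, S.c, S.α, S.α} := by
    ext g
    simp only [Set.mem_insert_iff, Set.mem_singleton_iff]
    tauto
  have hinj := S.injective_of_nodup [.b] [.c] [.A] [.A] 4 1 [0, 0, 0, 0, 0]
    [0, 0, 0, 0, 0] (by decide) (by decide) (by decide +kernel)
  simp only [ev, gen, List.map_cons, List.map_nil, List.prod_cons, List.prod_nil, mul_one] at hinj
  rw [he]
  exact card_central_product _ _ _ _ 4 1 (by norm_num) (by norm_num) S.mbb S.mcc S.mαα S.mαα
    S.comm_bα.symm S.comm_cα.symm S.comm_bα.symm S.comm_cα.symm S.bc_pow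
    (by rw [pow_one, mαα]; exact one_mem _) hinj

/-- `Γ_{B₁}` is elementary abelian. -/
lemma card_B₁ : Nat.card (Subgroup.closure {S.β, S.a, S.c * S.γ}) = 8 := by
  have he : ({S.β, S.a, S.c * S.γ} : Set (Equiv.Perm Word)) =
      {S.β, S.a, S.c * S.γ, S.c * S.γ} := by
    ext g
    simp only [Set.mem_insert_iff, Set.mem_singleton_iff]
    tauto
  have hinj := S.injective_of_nodup [.B] [.a] [.c, .C] [.c, .C] 2 1 [0, 0, 0, 0]
    [0, 0, 0, 0] (by decide) (by decide) (by decide +kernel)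
  simp only [ev, gen, List.map_cons, List.map_nil, List.prod_cons, List.prod_nil, mul_one] at hinj
  have h2 := mul_self_of_comm S.comm_cγ S.mcc S.mγγ
  have hac : Commute (S.c * S.γ) S.a := by
    refine Equiv.ext fun w => ?_
    induction w using word_cases <;> simp [ββ]
  rw [he]
  exact card_central_product _ _ _ _ 2 1 (by norm_num) (by norm_num) S.mββ S.maa h2 h2
    S.comm_cγ_β hac S.comm_cγ_β hac
    (by rw [pow_two]; exact mul_self_of_comm S.comm_aβ.symm S.mββ S.maa)
    (by rw [pow_one, h2]; exact one_mem _) hinj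

/-- `Γ_{C₁}` is the direct product of the dihedral group `⟨aα, bβ⟩` of order `8` with `⟨γ⟩`. -/
lemma card_C₁ : Nat.card (Subgroup.closure {S.γ, S.a * S.α, S.b * S.β}) = 16 := by
  have he : ({S.γ, S.a * S.α, S.b * S.β} : Set (Equiv.Perm Word)) =
      {S.a * S.α, S.b * S.β, S.γ, S.γ} := by
    ext g
    simp only [Set.mem_insert_iff, Set.mem_singleton_iff]
    tauto
  have hinj := S.injective_of_nodup [.a, .A] [.b, .B] [.C] [.C] 4 1 [0, 0, 0, 0]
    [0, 0, 0, 0] (by decide) (by decide) (by decide +kernel)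
  simp only [ev, gen, List.map_cons, List.map_nil, List.prod_cons, List.prod_nil, mul_one] at hinj
  rw [he]
  exact card_central_product _ _ _ _ 4 1 (by norm_num) (by norm_num)
    (mul_self_of_comm S.comm_aα S.maa S.mαα) (mul_self_of_comm S.comm_bβ S.mbb S.mββ) S.mγγ S.mγγ
    S.comm_aα_γ.symm S.comm_bβ_γ.symm S.comm_aα_γ.symm S.comm_bβ_γ.symm S.aαbβ_pow
    (by rw [pow_one, mγγ]; exact one_mem _) hinj

end NekSystem

/-- The orders of the six subgroups: |Γ_A| = 128, |Γ_B| = 32, |Γ_C| = 128,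
|Γ_{A₁}| = 16, |Γ_{B₁}| = 8, |Γ_{C₁}| = 16. -/
theorem statement7 (S : NekSystem) :
    Nat.card ↥(Subgroup.closure {S.β, S.γ, S.b, S.c} : Subgroup (Equiv.Perm Word)) = 128 ∧
    Nat.card ↥(Subgroup.closure {S.α, S.γ, S.a, S.c} : Subgroup (Equiv.Perm Word)) = 32 ∧
    Nat.card ↥(Subgroup.closure {S.α, S.β, S.a, S.b} : Subgroup (Equiv.Perm Word)) = 128 ∧
    Nat.card ↥(Subgroup.closure {S.α, S.b, S.c} : Subgroup (Equiv.Perm Word)) = 16 ∧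
    Nat.card ↥(Subgroup.closure {S.β, S.a, S.c * S.γ} : Subgroup (Equiv.Perm Word)) = 8 ∧
    Nat.card ↥(Subgroup.closure {S.γ, S.a * S.α, S.b * S.β} : Subgroup (Equiv.Perm Word)) = 16 := by
  exact ⟨S.card_A, S.card_B, S.card_C, S.card_A₁, S.card_B₁, S.card_C₁⟩
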